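/- Let G be a group having a free subgroup F of finite index m. Let n_1, n_2 ≥ 1 and let H_1, H_2 be subgroups of G generated by at most n_1 and n_2 elements respectively. Then H_1 ∩ H_2 is generated by at most m²(n_1 − 1)(n_2 − 1) + m elements. In particular, every virtually free group is strongly Howson. -/

import Mathlib

/-- `H` is generated by at most `n` elements. -/
def Subgroup.GenLE {G : Type*} [Group G] (H : Subgroup G) (n : ℕ) : Prop :=
  ∃ S : Finset G, Subgroup.closure (S : Set G) = H ∧ S.card ≤ n

set_option linter.unusedSectionVars false
set_option linter.unusedVariables false

namespace HNC

/-! ## Orbit counting -/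

section Orbits

/-- The orbit map of a subgroup acting on a type. -/
def orb {F α : Type*} [Group F] [MulAction F α] (H : Subgroup F) (a : α) :
    MulAction.orbitRel.Quotient H α := Quotient.mk _ a

lemma orb_eq {F α : Type*} [Group F] [MulAction F α] {H : Subgroup F} {a b : α} :
    orb H a = orb H b ↔ ∃ h ∈ H, h • b = a := by
  unfold orb
  rw [Quotient.eq]
  constructor
  · rintro ⟨h, hh⟩
    exact ⟨h.1, h.2, hh⟩
  · rintro ⟨h, hH, hh⟩
    exact ⟨⟨h, hH⟩, hh⟩

lemma count_le {α β A B : Type*} (qa : α → A) (qb : β → B) (S : Set α) (S' : Set β)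
    (R : α → β → Prop) (tot : ∀ a ∈ S, ∃ b ∈ S', R a b)
    (inj : ∀ a ∈ S, ∀ a' ∈ S, ∀ b b', R a b → R a' b' → qb b = qb b' → qa a = qa a')
    (fin : (qb '' S').Finite) : (qa '' S).Finite ∧ (qa '' S).ncard ≤ (qb '' S').ncard := by
  classical
  have h1 : ∀ q ∈ qa '' S, ∃ p : α × β, p.1 ∈ S ∧ p.2 ∈ S' ∧ R p.1 p.2 ∧ qa p.1 = q := by
    rintro q ⟨a, ha, rfl⟩
    obtain ⟨b, hb, hR⟩ := tot a ha
    exact ⟨(a, b), ha, hb, hR, rfl⟩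
  rcases (qa '' S).eq_empty_or_nonempty with hem | ⟨q0, hq0⟩
  · rw [hem]; simp
  have hne : Nonempty (α × β) := ⟨(h1 q0 hq0).choose⟩
  choose! p hp1 hp2 hp3 hp4 using h1
  have hmaps : ∀ q ∈ qa '' S, qb (p q).2 ∈ qb '' S' := fun q hq => ⟨_, hp2 q hq, rfl⟩
  have hinj : Set.InjOn (fun q => qb (p q).2) (qa '' S) := by
    intro q hq q' hq' h
    rw [← hp4 q hq, ← hp4 q' hq']
    exact inj _ (hp1 q hq) _ (hp1 q' hq') _ _ (hp3 q hq) (hp3 q' hq') h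
  exact ⟨Set.Finite.of_injOn hmaps hinj fin, Set.ncard_le_ncard_of_injOn _ hmaps hinj fin⟩

end Orbits

/-! ## Connectivity -/

section Conn

variable {F E : Type*} (src tgt : E → F)

/-- adjacency along an edge of `D`. -/
def Adj (D : Set E) (u w : F) : Prop :=
  ∃ d ∈ D, (u = src d ∧ w = tgt d) ∨ (w = src d ∧ u = tgt d)

/-- connectivity by edges of `D`. -/
def Conn (D : Set E) (u w : F) : Prop := Relation.ReflTransGen (Adj src tgt D) u w

/-- component. -/
def Comp (D : Set E) (u : F) : Set F := {w | Conn src tgt D u w}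

/-- edges spanned by a set of vertices. -/
def ES (V : Set F) : Set E := {d | src d ∈ V ∧ tgt d ∈ V}

/-- edges of `V` smaller than `e` -/
def DL [LinearOrder E] (V : Set F) (e : E) : Set E := {d | d ∈ ES src tgt V ∧ d < e}

/-- edges of `V` at most `e` -/
def DE [LinearOrder E] (V : Set F) (e : E) : Set E := {d | d ∈ ES src tgt V ∧ d ≤ e}

/-- bridges. -/
def Bridge [LinearOrder E] (V : Set F) (e : E) : Prop :=
  e ∈ ES src tgt V ∧ (Comp src tgt (DL src tgt V e) (src e)).Infinite ∧
    (Comp src tgt (DL src tgt V e) (tgt e)).Infinite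

/-- `v` is the least element of a finite component. -/
def Alive [LinearOrder F] (D : Set E) (v : F) : Prop :=
  (Comp src tgt D v).Finite ∧ ∀ w ∈ Comp src tgt D v, v ≤ w

/-- `v` dies at `e`. -/
def Dies [LinearOrder E] [LinearOrder F] (V : Set F) (v : F) (e : E) : Prop :=
  e ∈ ES src tgt V ∧ Alive src tgt (DL src tgt V e) v ∧ ¬ Alive src tgt (DE src tgt V e) v

/-- function-connectedness. -/
def FConn (V : Set F) : Prop :=
  ∀ f : F → ℚ, (∀ e ∈ ES src tgt V, f (src e) = f (tgt e)) → ∀ v ∈ V, ∀ w ∈ V, f v = f w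

variable {src tgt}

lemma Adj.symm {D : Set E} {u w : F} (h : Adj src tgt D u w) : Adj src tgt D w u := by
  obtain ⟨d, hd, h⟩ := h
  exact ⟨d, hd, h.symm⟩

lemma Conn.symm {D : Set E} {u w : F} (h : Conn src tgt D u w) : Conn src tgt D w u := by
  unfold Conn at *
  induction h with
  | refl => exact Relation.ReflTransGen.refl
  | tail _ h ih => exact Relation.ReflTransGen.head h.symm ih

lemma Conn.trans {D : Set E} {u v w : F} (h : Conn src tgt D u v) (h' : Conn src tgt D v w) :
    Conn src tgt D u w := Relation.ReflTransGen.trans h h'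

lemma Conn.refl {D : Set E} (u : F) : Conn src tgt D u u := Relation.ReflTransGen.refl

lemma Conn.edge {D : Set E} {e : E} (h : e ∈ D) : Conn src tgt D (src e) (tgt e) :=
  Relation.ReflTransGen.single ⟨e, h, Or.inl ⟨rfl, rfl⟩⟩

lemma Conn.mono {D D' : Set E} (hD : D ⊆ D') {u w : F} (h : Conn src tgt D u w) :
    Conn src tgt D' u w := by
  unfold Conn at *
  induction h with
  | refl => exact Relation.ReflTransGen.refl
  | tail _ h ih =>
    obtain ⟨d, hd, h⟩ := h
    exact Relation.ReflTransGen.tail ih ⟨d, hD hd, h⟩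

/-- A set closed under edges of `D` contains components. -/
lemma Conn.closed {D : Set E} {C : Set F} (hC : ∀ d ∈ D, src d ∈ C ↔ tgt d ∈ C) {u w : F}
    (h : Conn src tgt D u w) (hu : u ∈ C) : w ∈ C := by
  induction h with
  | refl => exact hu
  | tail _ h ih =>
    obtain ⟨d, hd, ⟨rfl, rfl⟩ | ⟨rfl, rfl⟩⟩ := h
    · exact (hC d hd).1 ih
    · exact (hC d hd).2 ih

lemma Comp_eq {D : Set E} {u w : F} (h : Conn src tgt D u w) :
    Comp src tgt D u = Comp src tgt D w := by
  ext x
  exact ⟨fun hx => h.symm.trans hx, fun hx => h.trans hx⟩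

lemma Comp_mono {D D' : Set E} (hD : D ⊆ D') (u : F) :
    Comp src tgt D u ⊆ Comp src tgt D' u := fun _ h => Conn.mono hD h

lemma Comp_subset {D : Set E} {V : Set F} (hD : D ⊆ ES src tgt V) {u : F} (hu : u ∈ V) :
    Comp src tgt D u ⊆ V := fun _ hw =>
  Conn.closed (fun d hd => ⟨fun _ => (hD hd).2, fun _ => (hD hd).1⟩) hw hu

lemma Alive.anti [LinearOrder F] {D D' : Set E} (hD : D ⊆ D') {v : F}
    (h : Alive src tgt D' v) : Alive src tgt D v :=
  ⟨h.1.subset (Comp_mono hD v), fun w hw => h.2 w (Comp_mono hD v hw)⟩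

variable [LinearOrder E]

lemma DL_sub_DE (V : Set F) (e : E) : DL src tgt V e ⊆ DE src tgt V e := fun _ h => ⟨h.1, h.2.le⟩

lemma DE_sub_DL (V : Set F) {e e' : E} (h : e < e') : DE src tgt V e ⊆ DL src tgt V e' :=
  fun _ hd => ⟨hd.1, hd.2.trans_lt h⟩

lemma DE_sub_DE (V : Set F) {e e' : E} (h : e ≤ e') : DE src tgt V e ⊆ DE src tgt V e' :=
  fun _ hd => ⟨hd.1, hd.2.trans h⟩

lemma Bridge.mono {V V' : Set F} (hV : V ⊆ V') {e : E} (h : Bridge src tgt V e) :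
    Bridge src tgt V' e := by
  have h0 : DL src tgt V e ⊆ DL src tgt V' e := fun d hd => ⟨⟨hV hd.1.1, hV hd.1.2⟩, hd.2⟩
  exact ⟨⟨hV h.1.1, hV h.1.2⟩, h.2.1.mono (Comp_mono h0 _), h.2.2.mono (Comp_mono h0 _)⟩

/-- Components with one more edge. -/
lemma Comp_DE {V : Set F} {e : E} {v : F} :
    Comp src tgt (DE src tgt V e) v ⊆ Comp src tgt (DL src tgt V e) v ∪
      (Comp src tgt (DL src tgt V e) (src e) ∪ Comp src tgt (DL src tgt V e) (tgt e)) := by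
  intro w hw
  refine Conn.closed (C := Comp src tgt (DL src tgt V e) v ∪
      (Comp src tgt (DL src tgt V e) (src e) ∪ Comp src tgt (DL src tgt V e) (tgt e))) ?_ hw
      (Or.inl (Conn.refl v))
  intro d hd
  rcases hd.2.lt_or_eq with hlt | rfl
  · have hc : Conn src tgt (DL src tgt V e) (src d) (tgt d) := Conn.edge ⟨hd.1, hlt⟩
    have h1 : ∀ u, src d ∈ Comp src tgt (DL src tgt V e) u ↔
        tgt d ∈ Comp src tgt (DL src tgt V e) u := fun u =>
      ⟨fun h => Conn.trans h hc, fun h => Conn.trans h hc.symm⟩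
    simp only [Set.mem_union, h1]
  · exact ⟨fun _ => Or.inr (Or.inr (Conn.refl _)), fun _ => Or.inr (Or.inl (Conn.refl _))⟩

lemma Comp_DE_eq {V : Set F} {e : E} {v : F}
    (h1 : ¬ Conn src tgt (DL src tgt V e) v (src e))
    (h2 : ¬ Conn src tgt (DL src tgt V e) v (tgt e)) :
    Comp src tgt (DE src tgt V e) v ⊆ Comp src tgt (DL src tgt V e) v := by
  intro w hw
  refine Conn.closed (C := Comp src tgt (DL src tgt V e) v) ?_ hw (Conn.refl v)
  intro d hd
  rcases hd.2.lt_or_eq with hlt | rfl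
  · have hc : Conn src tgt (DL src tgt V e) (src d) (tgt d) := Conn.edge ⟨hd.1, hlt⟩
    exact ⟨fun h => Conn.trans h hc, fun h => Conn.trans h hc.symm⟩
  · exact ⟨fun h => absurd h h1, fun h => absurd h h2⟩

variable [LinearOrder F]

lemma Dies.unique_edge {V : Set F} {v : F} {e e' : E} (h : Dies src tgt V v e)
    (h' : Dies src tgt V v e') : e = e' := by
  rcases lt_trichotomy e e' with hlt | heq | hlt
  · exact absurd (h'.2.1.anti (DE_sub_DL V hlt)) h.2.2
  · exact heq
  · exact absurd (h.2.1.anti (DE_sub_DL V hlt)) h'.2.2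

lemma Dies.conn {V : Set F} {v : F} {e : E} (h : Dies src tgt V v e) :
    Conn src tgt (DL src tgt V e) v (src e) ∨ Conn src tgt (DL src tgt V e) v (tgt e) := by
  by_contra hcon
  push Not at hcon
  have hs := Comp_DE_eq hcon.1 hcon.2
  exact h.2.2 ⟨h.2.1.1.subset hs, fun w hw => h.2.1.2 w (hs hw)⟩

lemma Dies.not_bridge {V : Set F} {v : F} {e : E} (h : Dies src tgt V v e) :
    ¬ Bridge src tgt V e := by
  intro hb
  rcases h.conn with hc | hc
  · exact hb.2.1 (by rw [← Comp_eq hc]; exact h.2.1.1)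
  · exact hb.2.2 (by rw [← Comp_eq hc]; exact h.2.1.1)

lemma Dies.unique_aux {V : Set F} {v v' : F} {e : E} (h : Dies src tgt V v e)
    (h' : Dies src tgt V v' e)
    (hc : (Conn src tgt (DL src tgt V e) v (src e) ∧ Conn src tgt (DL src tgt V e) v' (tgt e)) ∨
      (Conn src tgt (DL src tgt V e) v (tgt e) ∧ Conn src tgt (DL src tgt V e) v' (src e))) :
    v' ≤ v := by
  by_contra hlt
  push Not at hlt
  apply h.2.2
  have hsub : Comp src tgt (DE src tgt V e) v ⊆
      Comp src tgt (DL src tgt V e) v ∪ Comp src tgt (DL src tgt V e) v' := by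
    refine Comp_DE.trans ?_
    rcases hc with ⟨h1, h2⟩ | ⟨h1, h2⟩
    · rw [← Comp_eq h1, ← Comp_eq h2]
      intro x hx
      simp only [Set.mem_union] at hx ⊢
      tauto
    · rw [← Comp_eq h1, ← Comp_eq h2]
      intro x hx
      simp only [Set.mem_union] at hx ⊢
      tauto
  refine ⟨(h.2.1.1.union h'.2.1.1).subset hsub, fun w hw => ?_⟩
  rcases hsub hw with hw | hw
  · exact h.2.1.2 w hw
  · exact hlt.le.trans (h'.2.1.2 w hw)

lemma Alive.unique {D : Set E} {v v' : F} (h : Alive src tgt D v) (h' : Alive src tgt D v')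
    (hc : Conn src tgt D v v') : v = v' :=
  le_antisymm (h.2 _ hc) (h'.2 _ hc.symm)

lemma Dies.unique_vertex {V : Set F} {v v' : F} {e : E} (h : Dies src tgt V v e)
    (h' : Dies src tgt V v' e) : v = v' := by
  rcases h.conn with h1 | h1 <;> rcases h'.conn with h2 | h2
  · exact h.2.1.unique h'.2.1 (h1.trans h2.symm)
  · exact le_antisymm (h'.unique_aux h (Or.inr ⟨h2, h1⟩)) (h.unique_aux h' (Or.inl ⟨h1, h2⟩))
  · exact le_antisymm (h'.unique_aux h (Or.inl ⟨h2, h1⟩)) (h.unique_aux h' (Or.inr ⟨h1, h2⟩))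
  · exact h.2.1.unique h'.2.1 (h1.trans h2.symm)

lemma exists_alive {D : Set E} {u : F} (h : (Comp src tgt D u).Finite) :
    ∃ v, Conn src tgt D u v ∧ Alive src tgt D v := by
  obtain ⟨v, hv, hmin⟩ := Set.exists_min_image _ id h ⟨u, Conn.refl u⟩
  refine ⟨v, hv, ?_, fun w hw => hmin w (Conn.trans hv hw)⟩
  rw [← Comp_eq hv]; exact h

/-- an edge which is not a bridge kills some vertex. -/
lemma exists_dies {V : Set F} {e : E} (he : e ∈ ES src tgt V)
    (hac : ¬ Conn src tgt (DL src tgt V e) (src e) (tgt e))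
    (hb : ¬ Bridge src tgt V e) : ∃ v ∈ V, Dies src tgt V v e := by
  have hDL : DL src tgt V e ⊆ ES src tgt V := fun _ h => h.1
  have hedge : Conn src tgt (DE src tgt V e) (src e) (tgt e) := Conn.edge ⟨he, le_rfl⟩
  have key : ∀ a b : F, a ∈ V → b ∈ V → Conn src tgt (DE src tgt V e) a b →
      ¬ Conn src tgt (DL src tgt V e) a b →
      (Comp src tgt (DL src tgt V e) a).Finite → ∃ v ∈ V, Dies src tgt V v e := by
    intro a b ha hb hab hnab hfin
    obtain ⟨v, hv, hav⟩ := exists_alive hfin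
    have hvV : v ∈ V := Comp_subset hDL ha hv
    have hvb : Conn src tgt (DE src tgt V e) v b :=
      (Conn.mono (DL_sub_DE V e) hv).symm.trans hab
    by_cases hfb : (Comp src tgt (DL src tgt V e) b).Finite
    · obtain ⟨w, hw, haw⟩ := exists_alive hfb
      have hwV : w ∈ V := Comp_subset hDL hb hw
      have hvw : Conn src tgt (DE src tgt V e) v w :=
        hvb.trans (Conn.mono (DL_sub_DE V e) hw)
      rcases lt_trichotomy v w with hlt | heq | hlt
      · exact ⟨w, hwV, he, haw, fun hal => absurd (hal.2 v hvw.symm) (not_le.2 hlt)⟩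
      · subst heq
        exact absurd (hv.trans hw.symm) hnab
      · exact ⟨v, hvV, he, hav, fun hal => absurd (hal.2 w hvw) (not_le.2 hlt)⟩
    · refine ⟨v, hvV, he, hav, fun hal => hfb ?_⟩
      refine hal.1.subset ?_
      rw [Comp_eq hvb]
      exact Comp_mono (DL_sub_DE V e) b
  by_cases h1 : (Comp src tgt (DL src tgt V e) (src e)).Finite
  · exact key _ _ he.1 he.2 hedge hac h1
  · by_cases h2 : (Comp src tgt (DL src tgt V e) (tgt e)).Finite
    · exact key _ _ he.2 he.1 hedge.symm (fun h => hac h.symm) h2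
    · exact absurd ⟨he, h1, h2⟩ hb

end Conn

/-! ## Ordered group acting on an ordered tree -/

section Tree

variable {F E : Type*} [Group F] [MulAction F E]

/-- `F` is the vertex set of a tree with edge set `E`, and `F` acts. -/
structure IsTree (src tgt : E → F) : Prop where
  src_smul : ∀ (g : F) (e : E), src (g • e) = g * src e
  tgt_smul : ∀ (g : F) (e : E), tgt (g • e) = g * tgt e
  integ : ∀ φ : E → ℚ, ∃ f : F → ℚ, ∀ e, f (tgt e) - f (src e) = φ e
  uniq : ∀ f : F → ℚ, (∀ e, f (src e) = f (tgt e)) → ∀ a b, f a = f b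
  free : ∀ (g : F) (e : E), g • e = e → g = 1

/-- invariant set -/
def Inv {α : Type*} [MulAction F α] (H : Subgroup F) (V : Set α) : Prop :=
  ∀ h ∈ H, ∀ v ∈ V, h • v ∈ V

variable {src tgt : E → F}

lemma IsTree.acyclic (T : IsTree src tgt) {D : Set E} {e : E} (he : e ∉ D) :
    ¬ Conn src tgt D (src e) (tgt e) := by
  classical
  intro hc
  obtain ⟨f, hf⟩ := T.integ (fun d => if d = e then 1 else 0)
  have h1 : tgt e ∈ {w | f w = f (src e)} := by
    refine Conn.closed ?_ hc rfl
    intro d hd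
    have hde : d ≠ e := fun h => he (h ▸ hd)
    have := hf d
    rw [if_neg hde, sub_eq_zero] at this
    simp only [Set.mem_ofPred_eq, this]
  have h2 := hf e
  rw [if_pos rfl, h1] at h2
  simp at h2

lemma IsTree.smul_ES (T : IsTree src tgt) {H : Subgroup F} {V : Set F} (hV : Inv H V) :
    Inv H (ES src tgt V) := by
  intro h hh d hd
  refine ⟨?_, ?_⟩
  · rw [T.src_smul]; exact hV h hh _ hd.1
  · rw [T.tgt_smul]; exact hV h hh _ hd.2

lemma IsTree.conn_smul (T : IsTree src tgt) {D D' : Set E} {h : F}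
    (hD : ∀ d ∈ D, h • d ∈ D') {u w : F} (hc : Conn src tgt D u w) :
    Conn src tgt D' (h * u) (h * w) := by
  unfold Conn at *
  induction hc with
  | refl => exact Relation.ReflTransGen.refl
  | tail _ hs ih =>
    refine Relation.ReflTransGen.tail ih ?_
    obtain ⟨d, hd, hs⟩ := hs
    refine ⟨h • d, hD d hd, ?_⟩
    rw [T.src_smul, T.tgt_smul]
    rcases hs with ⟨rfl, rfl⟩ | ⟨rfl, rfl⟩
    · exact Or.inl ⟨rfl, rfl⟩
    · exact Or.inr ⟨rfl, rfl⟩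

lemma IsTree.comp_smul (T : IsTree src tgt) {D D' : Set E} {h : F}
    (hD : ∀ d, d ∈ D ↔ h • d ∈ D') {u w : F} :
    h * w ∈ Comp src tgt D' (h * u) ↔ w ∈ Comp src tgt D u := by
  constructor
  · intro hc
    have := T.conn_smul (D := D') (D' := D) (h := h⁻¹) (fun d hd => by
      rw [hD, smul_inv_smul]; exact hd) hc
    rw [inv_mul_cancel_left, inv_mul_cancel_left] at this
    exact this
  · intro hc
    exact T.conn_smul (fun d hd => (hD d).1 hd) hc

lemma IsTree.comp_finite (T : IsTree src tgt) {D D' : Set E} {h : F}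
    (hD : ∀ d, d ∈ D ↔ h • d ∈ D') {u : F} (hf : (Comp src tgt D u).Finite) :
    (Comp src tgt D' (h * u)).Finite := by
  refine (hf.image (fun w => h * w)).subset ?_
  intro w hw
  refine ⟨h⁻¹ * w, ?_, by simp⟩
  rw [← T.comp_smul hD]
  simpa using hw

variable [LinearOrder F] [LinearOrder E]

/-- The orders are invariant. -/
structure OrdInv (F E : Type*) [Group F] [MulAction F E] [LinearOrder F] [LinearOrder E] :
    Prop where
  vert : ∀ a b c : F, b ≤ c → a * b ≤ a * c
  edge : ∀ (a : F) (b c : E), b ≤ c → a • b ≤ a • c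

lemma OrdInv.vert_iff (O : OrdInv F E) (a b c : F) : a * b ≤ a * c ↔ b ≤ c :=
  ⟨fun h => by simpa using O.vert a⁻¹ _ _ h, O.vert a b c⟩

lemma OrdInv.edge_iff (O : OrdInv F E) (a : F) (b c : E) : a • b ≤ a • c ↔ b ≤ c :=
  ⟨fun h => by simpa using O.edge a⁻¹ _ _ h, O.edge a b c⟩

lemma OrdInv.edge_lt (O : OrdInv F E) (a : F) (b c : E) : a • b < a • c ↔ b < c := by
  rw [← not_le, ← not_le, O.edge_iff]

lemma IsTree.mem_ES_iff (T : IsTree src tgt) {H : Subgroup F} {V : Set F} (hV : Inv H V) {h : F}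
    (hh : h ∈ H) (d : E) : d ∈ ES src tgt V ↔ h • d ∈ ES src tgt V := by
  refine ⟨T.smul_ES hV h hh d, fun hd => ?_⟩
  simpa using T.smul_ES hV h⁻¹ (H.inv_mem hh) _ hd

lemma IsTree.DL_iff (T : IsTree src tgt) (O : OrdInv F E) {H : Subgroup F} {V : Set F}
    (hV : Inv H V) {h : F} (hh : h ∈ H) (e d : E) :
    d ∈ DL src tgt V e ↔ h • d ∈ DL src tgt V (h • e) := by
  unfold DL
  simp only [Set.mem_ofPred_eq, O.edge_lt, ← T.mem_ES_iff hV hh]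

lemma IsTree.DE_iff (T : IsTree src tgt) (O : OrdInv F E) {H : Subgroup F} {V : Set F}
    (hV : Inv H V) {h : F} (hh : h ∈ H) (e d : E) :
    d ∈ DE src tgt V e ↔ h • d ∈ DE src tgt V (h • e) := by
  unfold DE
  simp only [Set.mem_ofPred_eq, O.edge_iff, ← T.mem_ES_iff hV hh]

lemma IsTree.alive_smul (T : IsTree src tgt) (O : OrdInv F E) {D D' : Set E} {h : F}
    (hD : ∀ d, d ∈ D ↔ h • d ∈ D') {v : F} (hf : Alive src tgt D v) :
    Alive src tgt D' (h * v) := by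
  refine ⟨T.comp_finite hD hf.1, fun w hw => ?_⟩
  have := hf.2 (h⁻¹ * w) (by rw [← T.comp_smul hD]; simpa using hw)
  simpa using O.vert h _ _ this

lemma IsTree.dies_smul (T : IsTree src tgt) (O : OrdInv F E) {H : Subgroup F} {V : Set F}
    (hV : Inv H V) {h : F} (hh : h ∈ H) {e : E} {v : F} (hd : Dies src tgt V v e) :
    Dies src tgt V (h * v) (h • e) := by
  refine ⟨(T.mem_ES_iff hV hh e).1 hd.1, T.alive_smul O (T.DL_iff O hV hh e) hd.2.1, ?_⟩
  intro ha
  apply hd.2.2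
  have := T.alive_smul O (D := DE src tgt V (h • e)) (D' := DE src tgt V e) (h := h⁻¹) (fun d => by
    rw [T.DE_iff O hV hh e, smul_inv_smul]) ha
  simpa using this

/-- the set of edges which are not bridges -/
def NB (src tgt : E → F) (V : Set F) : Set E := {e | e ∈ ES src tgt V ∧ ¬ Bridge src tgt V e}

/-- the set of edges which are bridges -/
def BR (src tgt : E → F) (V : Set F) : Set E := {e | Bridge src tgt V e}

/-- Direction B. -/
lemma IsTree.count_NB (T : IsTree src tgt) (O : OrdInv F E) {H : Subgroup F} {V : Set F}
    (hV : Inv H V) (hfin : (orb H '' V).Finite) :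
    (orb H '' NB src tgt V).ncard ≤ (orb H '' V).ncard := by
  refine (count_le (orb H) (orb H) (NB src tgt V) V (fun e v => Dies src tgt V v e) ?_ ?_ hfin).2
  · intro e he
    exact exists_dies he.1 (T.acyclic (fun h => lt_irrefl _ h.2)) he.2
  · intro a _ a' _ b b' hab hab' hq
    rw [orb_eq] at hq ⊢
    obtain ⟨h, hh, rfl⟩ := hq
    exact ⟨h, hh, (T.dies_smul O hV hh hab').unique_edge hab⟩

lemma conn_bounded {U : Set E} {v w : F} {V : Set F} (hU : U ⊆ ES src tgt V)
    (h : Conn src tgt U v w) : v = w ∨ ∃ u ∈ U, Conn src tgt (DE src tgt V u) v w := by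
  unfold Conn at h
  induction h with
  | refl => exact Or.inl rfl
  | tail _ hs ih =>
    right
    obtain ⟨d, hd, hs⟩ := hs
    rcases ih with rfl | ⟨u, hu, hc⟩
    · exact ⟨d, hd, Relation.ReflTransGen.single ⟨d, ⟨hU hd, le_rfl⟩, hs⟩⟩
    · rcases le_total u d with hud | hud
      · exact ⟨d, hd, Relation.ReflTransGen.tail (Conn.mono (DE_sub_DE V hud) hc)
          ⟨d, ⟨hU hd, le_rfl⟩, hs⟩⟩
      · exact ⟨u, hu, Relation.ReflTransGen.tail hc ⟨d, ⟨hU hd, hud⟩, hs⟩⟩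

lemma IsTree.finite_star (T : IsTree src tgt) {H : Subgroup F} {V : Set F}
    (hE : (orb H '' ES src tgt V).Finite) (C : Set F) (hC : C.Finite) :
    {e | e ∈ ES src tgt V ∧ (src e ∈ C ∨ tgt e ∈ C)}.Finite := by
  have h1 : ∀ c : F, {e | e ∈ ES src tgt V ∧ src e = c}.Finite := by
    intro c
    refine Set.Finite.of_injOn (f := orb H) (t := orb H '' ES src tgt V)
      (fun e he => ⟨e, he.1, rfl⟩) ?_ hE
    intro e he e' he' hee
    obtain ⟨h, hh, rfl⟩ := orb_eq.1 hee
    have := he.2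
    rw [T.src_smul, he'.2] at this
    have h1 : h = 1 := by simpa using this
    simp [h1]
  have h2 : ∀ c : F, {e | e ∈ ES src tgt V ∧ tgt e = c}.Finite := by
    intro c
    refine Set.Finite.of_injOn (f := orb H) (t := orb H '' ES src tgt V)
      (fun e he => ⟨e, he.1, rfl⟩) ?_ hE
    intro e he e' he' hee
    obtain ⟨h, hh, rfl⟩ := orb_eq.1 hee
    have := he.2
    rw [T.tgt_smul, he'.2] at this
    have h1 : h = 1 := by simpa using this
    simp [h1]
  refine ((hC.biUnion (fun c _ => h1 c)).union (hC.biUnion (fun c _ => h2 c))).subset ?_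
  rintro e ⟨he, hs | hs⟩
  · left
    simp only [Set.mem_iUnion]
    exact ⟨_, hs, he, rfl⟩
  · right
    simp only [Set.mem_iUnion]
    exact ⟨_, hs, he, rfl⟩

/-- every vertex dies -/
lemma IsTree.vertex_dies (T : IsTree src tgt) (O : OrdInv F E) {H : Subgroup F} {V : Set F}
    (hV : Inv H V) (hfin : (orb H '' V).Finite) (hE : (orb H '' ES src tgt V).Finite)
    (hconn : FConn src tgt V) (hH : H ≠ ⊥) {v : F} (hv : v ∈ V) :
    ∃ e, Dies src tgt V v e := by
  classical
  by_contra hno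
  push Not at hno
  set U : Set E := {e | e ∈ ES src tgt V ∧ Alive src tgt (DE src tgt V e) v} with hUdef
  have hUE : U ⊆ ES src tgt V := fun _ h => h.1
  set C := Comp src tgt U v with hCdef
  have hCV : C ⊆ V := Comp_subset hUE hv
  have hvC : v ∈ C := Conn.refl v
  have hCmin : ∀ w ∈ C, v ≤ w := by
    intro w hw
    rcases conn_bounded hUE hw with rfl | ⟨u, hu, hc⟩
    · exact le_rfl
    · exact hu.2.2 w hc
  -- elements of `H` that move `v` inside `C`, both ways
  have htriv : ∀ h : F, h * v ∈ C → h⁻¹ * v ∈ C → h = 1 := by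
    intro h h1 h2
    have h3 := hCmin _ h1
    have h4 := O.vert h _ _ (hCmin _ h2)
    rw [mul_inv_cancel_left] at h4
    have := le_antisymm h3 h4
    simpa using this.symm
  by_cases hCfin : C.Finite
  · -- finite case
    by_cases hbd : ∃ e ∈ ES src tgt V, ¬ (src e ∈ C ↔ tgt e ∈ C)
    · have hBfin : {e | e ∈ ES src tgt V ∧ ¬ (src e ∈ C ↔ tgt e ∈ C)}.Finite := by
        refine (T.finite_star hE C hCfin).subset ?_
        rintro e ⟨he, hn⟩
        refine ⟨he, ?_⟩
        tauto
      obtain ⟨e, ⟨he, hne⟩, hmin⟩ := Set.exists_min_image _ id hBfin hbd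
      have hsub : Comp src tgt (DL src tgt V e) v ⊆ C := by
        intro w hw
        refine Conn.closed ?_ hw hvC
        intro d hd
        by_contra hcon
        exact absurd (hmin d ⟨hd.1, hcon⟩) (not_le.2 hd.2)
      have hal : Alive src tgt (DL src tgt V e) v :=
        ⟨hCfin.subset hsub, fun w hw => hCmin w (hsub hw)⟩
      have hal2 : Alive src tgt (DE src tgt V e) v := by
        by_contra hcon
        exact hno e ⟨he, hal, hcon⟩
      have heU : e ∈ U := ⟨he, hal2⟩
      have hc : Conn src tgt U (src e) (tgt e) := Conn.edge heU
      exact hne ⟨fun h => Conn.trans h hc, fun h => Conn.trans h hc.symm⟩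
    · push Not at hbd
      have hVC : V ⊆ C := by
        intro w hw
        have := hconn (fun x => if x ∈ C then 1 else 0) (fun e he => by simp only [hbd e he])
          v hv w hw
        by_contra hcon
        simp [hvC, hcon] at this
      obtain ⟨h, hne⟩ := (Subgroup.ne_bot_iff_exists_ne_one.1 hH)
      have h1 := htriv h (hVC (hV h.1 h.2 v hv)) (hVC (hV _ (H.inv_mem h.2) v hv))
      exact hne (Subtype.ext h1)
  · -- infinite case
    have hex : ∃ w ∈ C, ∃ w' ∈ C, w ≠ w' ∧ orb H w = orb H w' := by
      have := Set.Infinite.exists_ne_map_eq_of_mapsTo (f := orb H) (s := C) (t := orb H '' V)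
        hCfin (fun w hw => ⟨w, hCV hw, rfl⟩) hfin
      obtain ⟨w, hw, w', hw', h1, h2⟩ := this
      exact ⟨w, hw, w', hw', h1, h2⟩
    obtain ⟨w, hw, w', hw', hne, hq⟩ := hex
    obtain ⟨h, hh, hhw⟩ := orb_eq.1 hq
    have key : ∀ h ∈ H, ∀ w ∈ C, h * w ∈ C → h * v ∈ C := by
      intro h hh w hw hhw
      rcases conn_bounded hUE hw with rfl | ⟨u, hu, hc⟩
      · exact hhw
      · by_cases huU : h • u ∈ U
        · have h1 : Conn src tgt (DE src tgt V (h • u)) (h * w) (h * v) :=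
            T.conn_smul (fun d hd => (T.DE_iff O hV hh u d).1 hd) hc.symm
          have h2 : DE src tgt V (h • u) ⊆ U := by
            intro d hd
            exact ⟨hd.1, huU.2.anti (DE_sub_DE V hd.2)⟩
          exact Conn.trans hhw (Conn.mono h2 h1)
        · exfalso
          apply hCfin
          have h1 : U ⊆ DE src tgt V (h • u) := by
            intro d hd
            refine ⟨hd.1, ?_⟩
            by_contra hcon
            push Not at hcon
            exact huU ⟨(T.mem_ES_iff hV hh u).1 hu.1, hd.2.anti (DE_sub_DE V hcon.le)⟩
          have h2 : (Comp src tgt (DE src tgt V (h • u)) (h * w)).Finite := by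
            refine T.comp_finite (T.DE_iff O hV hh u) ?_
            rw [← Comp_eq hc]
            exact hu.2.1
          refine h2.subset ?_
          rw [hCdef, Comp_eq hhw]
          exact Comp_mono h1 _
    have h1 : h * v ∈ C := key h hh w' hw' (by rw [smul_eq_mul] at hhw; rw [hhw]; exact hw)
    have h2 : h⁻¹ * v ∈ C := key h⁻¹ (H.inv_mem hh) w hw (by
      rw [smul_eq_mul] at hhw; rw [← hhw]; simpa using hw')
    have h3 := htriv h h1 h2
    subst h3
    exact hne (by simpa using hhw.symm)

/-- Direction A. -/
lemma IsTree.count_V (T : IsTree src tgt) (O : OrdInv F E) {H : Subgroup F} {V : Set F}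
    (hV : Inv H V) (hfin : (orb H '' V).Finite) (hE : (orb H '' ES src tgt V).Finite)
    (hconn : FConn src tgt V) (hH : H ≠ ⊥) :
    (orb H '' V).ncard ≤ (orb H '' NB src tgt V).ncard := by
  refine (count_le (orb H) (orb H) V (NB src tgt V) (fun v e => Dies src tgt V v e) ?_ ?_
    (hE.subset (Set.image_mono fun e he => he.1))).2
  · intro v hv
    obtain ⟨e, he⟩ := T.vertex_dies O hV hfin hE hconn hH hv
    exact ⟨e, ⟨he.1, he.not_bridge⟩, he⟩
  · intro a _ a' _ b b' hab hab' hq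
    rw [orb_eq] at hq ⊢
    obtain ⟨h, hh, rfl⟩ := hq
    exact ⟨h, hh, (T.dies_smul O hV hh hab').unique_vertex hab⟩

/-- The set of bridges is invariant. -/
lemma IsTree.inv_BR (T : IsTree src tgt) (O : OrdInv F E) {H : Subgroup F} {V : Set F}
    (hV : Inv H V) : Inv H (BR src tgt V) := by
  intro h hh e he
  have key : ∀ u, (Comp src tgt (DL src tgt V e) u).Infinite →
      (Comp src tgt (DL src tgt V (h • e)) (h * u)).Infinite := by
    intro u hu hf
    apply hu
    have := T.comp_finite (D := DL src tgt V (h • e)) (D' := DL src tgt V e) (h := h⁻¹) (fun d => by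
      rw [T.DL_iff O hV hh e, smul_inv_smul]) hf
    simpa using this
  refine ⟨(T.mem_ES_iff hV hh e).1 he.1, ?_, ?_⟩
  · rw [T.src_smul]; exact key _ he.2.1
  · rw [T.tgt_smul]; exact key _ he.2.2

lemma IsTree.count_split (T : IsTree src tgt) (O : OrdInv F E) {H : Subgroup F} {V : Set F}
    (hV : Inv H V) (hE : (orb H '' ES src tgt V).Finite) :
    (orb H '' ES src tgt V).ncard =
      (orb H '' NB src tgt V).ncard + (orb H '' BR src tgt V).ncard := by
  have hu : orb H '' ES src tgt V = orb H '' NB src tgt V ∪ orb H '' BR src tgt V := by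
    rw [← Set.image_union]
    congr 1
    ext e
    simp only [NB, BR, Set.mem_union, Set.mem_ofPred_eq]
    constructor
    · intro h
      by_cases hb : Bridge src tgt V e
      · exact Or.inr hb
      · exact Or.inl ⟨h, hb⟩
    · rintro (h | h)
      · exact h.1
      · exact h.1
  rw [hu] at hE ⊢
  refine Set.ncard_union_eq ?_ (hE.subset Set.subset_union_left) (hE.subset Set.subset_union_right)
  rw [Set.disjoint_left]
  rintro _ ⟨e, he, rfl⟩ ⟨e', he', hee⟩
  obtain ⟨h, hh, rfl⟩ := orb_eq.1 hee.symm
  exact he.2 (T.inv_BR O hV h hh e' he')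

/-- bridges of the intersection. -/
lemma IsTree.count_BR (T : IsTree src tgt) {H K : Subgroup F} {V W : Set F}
    (hE : (orb H '' ES src tgt V).Finite) (hE' : (orb K '' ES src tgt W).Finite) :
    (orb (H ⊓ K) '' ES src tgt (V ∩ W)).Finite ∧
    (orb (H ⊓ K) '' BR src tgt (V ∩ W)).ncard ≤
      (orb H '' BR src tgt V).ncard * (orb K '' BR src tgt W).ncard := by
  have hinj : ∀ e e' : E, ((orb H e, orb K e) = (orb H e', orb K e')) →
      orb (H ⊓ K) e = orb (H ⊓ K) e' := by
    intro e e' hq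
    simp only [Prod.mk.injEq, orb_eq] at hq
    obtain ⟨⟨h, hh, h1⟩, ⟨k, hk, h2⟩⟩ := hq
    have h3 : (h⁻¹ * k) • e' = e' := by rw [mul_smul, h2, ← h1, inv_smul_smul]
    have h4 := T.free _ _ h3
    rw [inv_mul_eq_one] at h4
    subst h4
    exact orb_eq.2 ⟨h, ⟨hh, hk⟩, h1⟩
  have gen : ∀ A B C : Set E, A ⊆ B → A ⊆ C → (orb H '' B).Finite → (orb K '' C).Finite →
      (orb (H ⊓ K) '' A).Finite ∧
      (orb (H ⊓ K) '' A).ncard ≤ (orb H '' B).ncard * (orb K '' C).ncard := by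
    intro A B C hAB hAC hB hC
    have hsub : (fun e => (orb H e, orb K e)) '' A ⊆ (orb H '' B) ×ˢ (orb K '' C) := by
      rintro _ ⟨e, he, rfl⟩
      exact ⟨⟨e, hAB he, rfl⟩, ⟨e, hAC he, rfl⟩⟩
    have hf := (hB.prod hC)
    have := count_le (orb (H ⊓ K)) (fun e => (orb H e, orb K e)) A A (fun a b => a = b)
      (fun a ha => ⟨a, ha, rfl⟩) (by
        rintro a _ a' _ b b' rfl rfl h
        exact hinj _ _ h) (hf.subset hsub)
    refine ⟨this.1, this.2.trans ((Set.ncard_le_ncard hsub hf).trans ?_)⟩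
    rw [Set.ncard_prod]
  refine ⟨(gen _ (ES src tgt V) (ES src tgt W) (fun e he => ⟨he.1.1, he.2.1⟩)
    (fun e he => ⟨he.1.2, he.2.2⟩) hE hE').1, (gen _ (BR src tgt V) (BR src tgt W)
    (fun e he => Bridge.mono Set.inter_subset_left he)
    (fun e he => Bridge.mono Set.inter_subset_right he)
    (hE.subset (Set.image_mono fun e he => he.1))
    (hE'.subset (Set.image_mono fun e he => he.1))).2⟩

end Tree

/-! ## Linear algebra -/

section LinAlg

variable {F E : Type*} [Group F] [MulAction F E] {src tgt : E → F}

lemma IsTree.fconn_inter (T : IsTree src tgt) {V W : Set F} (hV : FConn src tgt V)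
    (hW : FConn src tgt W) : FConn src tgt (V ∩ W) := by
  classical
  intro f hf v hv w hw
  obtain ⟨g, hg⟩ := T.integ (fun e => if e ∈ ES src tgt V then f (tgt e) - f (src e) else 0)
  have h1 : g v = g w := by
    refine hW g (fun e he => ?_) v hv.2 w hw.2
    have h := hg e
    by_cases heV : e ∈ ES src tgt V
    · rw [if_pos heV, hf e ⟨⟨heV.1, he.1⟩, ⟨heV.2, he.2⟩⟩] at h
      linarith
    · rw [if_neg heV] at h
      linarith
  have h2 : g v - f v = g w - f w := by
    refine hV (fun x => g x - f x) (fun e he => ?_) v hv.1 w hw.1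
    have h := hg e
    rw [if_pos he] at h
    linarith
  linarith

/-- finite connected sets containing `1` and `g`. -/
lemma IsTree.exists_path (T : IsTree src tgt) (g : F) :
    ∃ P : Set F, P.Finite ∧ 1 ∈ P ∧ g ∈ P ∧ FConn src tgt P := by
  classical
  let Q : F → Prop := fun g => ∃ P : Set F, P.Finite ∧ 1 ∈ P ∧ g ∈ P ∧ FConn src tgt P
  have step : ∀ a b : F, Q a → (∃ e, (src e = a ∧ tgt e = b) ∨ (src e = b ∧ tgt e = a)) → Q b := by
    rintro a b ⟨P, hP, h1, ha, hc⟩ ⟨e, he⟩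
    refine ⟨insert b P, hP.insert b, Or.inr h1, Or.inl rfl, ?_⟩
    intro f hf
    have hP' : ∀ v ∈ P, ∀ w ∈ P, f v = f w :=
      hc f (fun d hd => hf d ⟨Or.inr hd.1, Or.inr hd.2⟩)
    have hab : f a = f b := by
      rcases he with ⟨rfl, rfl⟩ | ⟨rfl, rfl⟩
      · exact hf e ⟨Or.inr ha, Or.inl rfl⟩
      · exact (hf e ⟨Or.inl rfl, Or.inr ha⟩).symm
    have hall : ∀ v ∈ insert b P, f v = f a := by
      rintro v (rfl | hv)
      · exact hab.symm
      · exact hP' v hv a ha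
    intro v hv w hw
    rw [hall v hv, hall w hw]
  have h1 : Q 1 := ⟨{1}, Set.finite_singleton 1, rfl, rfl, by
    rintro f _ v rfl w rfl
    rfl⟩
  have := T.uniq (fun x => if Q x then 1 else 0) (fun e => by
    have : Q (src e) ↔ Q (tgt e) :=
      ⟨fun h => step _ _ h ⟨e, Or.inl ⟨rfl, rfl⟩⟩, fun h => step _ _ h ⟨e, Or.inr ⟨rfl, rfl⟩⟩⟩
    simp only [this]) 1 g
  change Q g
  by_contra hcon
  simp [h1, hcon] at this

/-- invariant, cocompact subtree. -/
lemma IsTree.exists_hull (T : IsTree src tgt) (S : Finset F) :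
    ∃ V : Set F, Inv (Subgroup.closure (S : Set F)) V ∧ 1 ∈ V ∧
      (orb (Subgroup.closure (S : Set F)) '' V).Finite ∧ FConn src tgt V := by
  classical
  choose P hfin h1 hg hc using T.exists_path
  set H := Subgroup.closure (S : Set F) with hH
  let V : Set F := {v | ∃ h ∈ H, ∃ s ∈ insert 1 S, ∃ p ∈ P s, v = h * p}
  have hmem : ∀ h ∈ H, ∀ s ∈ insert 1 S, ∀ p ∈ P s, h * p ∈ V :=
    fun h hh s hs p hp => ⟨h, hh, s, hs, p, hp, rfl⟩
  refine ⟨V, ?_, ?_, ?_, ?_⟩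
  · rintro k hk _ ⟨h, hh, s, hs, p, hp, rfl⟩
    exact ⟨k * h, H.mul_mem hk hh, s, hs, p, hp, by simp [mul_assoc]⟩
  · exact ⟨1, H.one_mem, 1, Finset.mem_insert_self _ _, 1, h1 1, by simp⟩
  · have hf : (⋃ s ∈ (insert 1 S : Finset F), P s).Finite :=
      Set.Finite.biUnion (Finset.finite_toSet _) (fun s _ => hfin s)
    refine (hf.image (orb H)).subset ?_
    rintro _ ⟨_, ⟨h, hh, s, hs, p, hp, rfl⟩, rfl⟩
    refine ⟨p, ?_, ?_⟩
    · simp only [Set.mem_iUnion]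
      exact ⟨s, hs, hp⟩
    · exact (orb_eq.2 ⟨h, hh, rfl⟩).symm
  · intro f hf
    have key : ∀ h ∈ H, ∀ s ∈ insert 1 S, ∀ p ∈ P s, f (h * p) = f h := by
      intro h hh s hs p hp
      have := hc s (fun x => f (h * x)) (fun e he => by
        have := hf (h • e) ⟨by rw [T.src_smul]; exact hmem h hh s hs _ he.1,
          by rw [T.tgt_smul]; exact hmem h hh s hs _ he.2⟩
        rw [T.src_smul, T.tgt_smul] at this
        exact this) p hp 1 (h1 s)
      simpa using this
    have hstep : ∀ h ∈ H, ∀ s ∈ S, f (h * s) = f h := fun h hh s hs =>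
      key h hh s (Finset.mem_insert_of_mem hs) s (hg s)
    have hconst : ∀ k ∈ H, ∀ h ∈ H, f (h * k) = f h := by
      intro k hk
      rw [hH] at hk
      induction hk using Subgroup.closure_induction with
      | mem x hx => intro h hh; exact hstep h hh x hx
      | one => intro h _; simp
      | mul x y hx hy ihx ihy =>
        intro h hh
        rw [← mul_assoc, ihy (h * x) (H.mul_mem hh hx), ihx h hh]
      | inv x hx ih =>
        intro h hh
        have := ih (h * x⁻¹) (H.mul_mem hh (H.inv_mem hx))
        simpa using this.symm
    have hall : ∀ v ∈ V, f v = f 1 := by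
      rintro _ ⟨h, hh, s, hs, p, hp, rfl⟩
      rw [key h hh s hs p hp]
      simpa using hconst h hh 1 H.one_mem
    intro v hv w hw
    rw [hall v hv, hall w hw]

/-- The normalized integral. -/
noncomputable def IsTree.I (T : IsTree src tgt) : (E → ℚ) →ₗ[ℚ] (F → ℚ) where
  toFun φ := fun g => (T.integ φ).choose g - (T.integ φ).choose 1
  map_add' φ ψ := by
    funext g
    have h := T.uniq (fun x => (T.integ (φ + ψ)).choose x - (T.integ φ).choose x -
      (T.integ ψ).choose x) (fun e => by
        have h1 := (T.integ (φ + ψ)).choose_spec e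
        have h2 := (T.integ φ).choose_spec e
        have h3 := (T.integ ψ).choose_spec e
        simp only [Pi.add_apply] at h1
        linarith) g 1
    simp only [Pi.add_apply] at h ⊢
    linarith
  map_smul' c φ := by
    funext g
    have h := T.uniq (fun x => (T.integ (c • φ)).choose x - c * (T.integ φ).choose x) (fun e => by
        have h1 := (T.integ (c • φ)).choose_spec e
        have h2 := (T.integ φ).choose_spec e
        simp only [Pi.smul_apply, smul_eq_mul] at h1
        linear_combination -h1 + c * h2) g 1
    simp only [Pi.smul_apply, smul_eq_mul, RingHom.id_apply] at h ⊢
    linarith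

lemma IsTree.I_one (T : IsTree src tgt) (φ : E → ℚ) : T.I φ 1 = 0 := by
  simp [IsTree.I]

lemma IsTree.I_d (T : IsTree src tgt) (φ : E → ℚ) (e : E) :
    T.I φ (tgt e) - T.I φ (src e) = φ e := by
  have := (T.integ φ).choose_spec e
  simp only [IsTree.I, LinearMap.coe_mk, AddHom.coe_mk]
  linarith

lemma IsTree.I_mul (T : IsTree src tgt) (φ : E → ℚ) (h : F) (hφ : ∀ e, φ (h • e) = φ e) (g : F) :
    T.I φ (h * g) = T.I φ h + T.I φ g := by
  have := T.uniq (fun x => T.I φ (h * x) - T.I φ x) (fun e => by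
    have h1 := T.I_d φ (h • e)
    have h2 := T.I_d φ e
    rw [T.src_smul, T.tgt_smul, hφ] at h1
    linarith) g 1
  simp only [mul_one, T.I_one] at this
  linarith

/-- the edge count is bounded by the number of generators. -/
lemma IsTree.count_E_le (T : IsTree src tgt) (S : Finset F) {V : Set F}
    (hV : Inv (Subgroup.closure (S : Set F)) V) (h1 : 1 ∈ V)
    (hfin : (orb (Subgroup.closure (S : Set F)) '' V).Finite) :
    (orb (Subgroup.closure (S : Set F)) '' ES src tgt V).Finite ∧
    (orb (Subgroup.closure (S : Set F)) '' ES src tgt V).ncard + 1 ≤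
      S.card + (orb (Subgroup.closure (S : Set F)) '' V).ncard := by
  classical
  set H := Subgroup.closure (S : Set F) with hH
  set A := orb H '' ES src tgt V with hA
  set B := orb H '' V with hB
  have hBft : Fintype B := hfin.fintype
  have hsec : ∀ b : B, ∃ v ∈ V, orb H v = b.1 := fun b => b.2
  choose t htV ht using hsec
  -- extension of a function on orbits
  let ext : (A →₀ ℚ) →ₗ[ℚ] (E → ℚ) :=
    { toFun := fun c e => if h : orb H e ∈ A then c ⟨orb H e, h⟩ else 0
      map_add' := by
        intro c c'
        funext e
        by_cases h : orb H e ∈ A <;> simp [h]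
      map_smul' := by
        intro r c
        funext e
        by_cases h : orb H e ∈ A <;> simp [h] }
  have hext : ∀ c, ∀ h ∈ H, ∀ e, ext c (h • e) = ext c e := by
    intro c h hh e
    have : orb H (h • e) = orb H e := orb_eq.2 ⟨h, hh, rfl⟩
    simp only [ext, LinearMap.coe_mk, AddHom.coe_mk, this]
  let J : (A →₀ ℚ) →ₗ[ℚ] (F → ℚ) := T.I ∘ₗ ext
  let Ψ : (A →₀ ℚ) × ℚ →ₗ[ℚ] (S → ℚ) × (B → ℚ) :=
    { toFun := fun p => (fun s => J p.1 s, fun b => J p.1 (t b) + p.2)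
      map_add' := by
        intro p q
        ext x
        · simp
        · simp only [Prod.fst_add, Prod.snd_add, map_add, Pi.add_apply]; ring
      map_smul' := by
        intro r p
        ext x
        · simp
        · simp [mul_add] }
  have hΨ : Function.Injective Ψ := by
    rw [← LinearMap.ker_eq_bot, LinearMap.ker_eq_bot']
    rintro ⟨c, r⟩ h0
    have hs : ∀ s ∈ S, J c s = 0 := fun s hs => congrFun (congrArg Prod.fst h0) ⟨s, hs⟩
    have hb : ∀ b : B, J c (t b) + r = 0 := fun b => congrFun (congrArg Prod.snd h0) b
    have hmul : ∀ h ∈ H, ∀ g, J c (h * g) = J c h + J c g := fun h hh g =>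
      T.I_mul (ext c) h (hext c h hh) g
    have hJH : ∀ h ∈ H, J c h = 0 := by
      intro k hk
      rw [hH] at hk
      induction hk using Subgroup.closure_induction with
      | mem x hx => exact hs x hx
      | one => exact T.I_one _
      | mul x y hx hy ihx ihy => rw [hmul x hx, ihx, ihy, add_zero]
      | inv x hx ih =>
        have := hmul x hx x⁻¹
        rw [mul_inv_cancel, ih, zero_add] at this
        rw [← this]
        exact T.I_one _
    have hJV : ∀ v ∈ V, J c v = -r := by
      intro v hv
      have h2 := ht ⟨orb H v, v, hv, rfl⟩
      obtain ⟨h, hh, h3⟩ := orb_eq.1 h2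
      have h4 := hb ⟨orb H v, v, hv, rfl⟩
      rw [← h3, smul_eq_mul, hmul h hh, hJH h hh] at h4
      linarith
    have hr : r = 0 := by
      have := hJV 1 h1
      have h2 : J c 1 = 0 := T.I_one _
      linarith
    have hc : c = 0 := by
      ext ⟨a, e, he, rfl⟩
      have h2 := T.I_d (ext c) e
      have h3 := hJV _ he.1
      have h4 := hJV _ he.2
      change J c (tgt e) - J c (src e) = ext c e at h2
      rw [h3, h4, sub_self] at h2
      have hmem : orb H e ∈ A := ⟨e, he, rfl⟩
      simp only [ext, LinearMap.coe_mk, AddHom.coe_mk, hmem, dif_pos] at h2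
      exact h2.symm
    rw [hc, hr]
    rfl
  have hfd : Module.Finite ℚ ((A →₀ ℚ) × ℚ) := Module.Finite.of_injective Ψ hΨ
  have hfd2 : Module.Finite ℚ (A →₀ ℚ) :=
    Module.Finite.of_surjective (LinearMap.fst ℚ (A →₀ ℚ) ℚ) LinearMap.fst_surjective
  have hAfin : Finite A := Module.Finite.finite_basis (Finsupp.basisSingleOne (R := ℚ) (ι := A))
  have hAft : Fintype A := Fintype.ofFinite A
  have hrank := LinearMap.finrank_le_finrank_of_injective hΨ
  rw [Module.finrank_prod, Module.finrank_prod, Module.finrank_finsupp_self, Module.finrank_self,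
    Module.finrank_fintype_fun_eq_card, Module.finrank_fintype_fun_eq_card,
    Fintype.card_coe] at hrank
  refine ⟨Set.toFinite A, ?_⟩
  rw [← Nat.card_coe_set_eq, ← Nat.card_coe_set_eq, Nat.card_eq_fintype_card,
    Nat.card_eq_fintype_card]
  exact hrank

/-- A free group acting freely on a connected graph with finite quotient. -/
lemma IsTree.gen (T : IsTree src tgt) (L : Subgroup F) [IsFreeGroup L] {V : Set F}
    (hV : Inv L V) (h1 : 1 ∈ V) (hconn : FConn src tgt V)
    (hfin : (orb L '' V).Finite) (hE : (orb L '' ES src tgt V).Finite) :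
    ∃ S : Finset F, Subgroup.closure (S : Set F) = L ∧
      S.card + (orb L '' V).ncard ≤ (orb L '' ES src tgt V).ncard + 1 := by
  classical
  set A := orb L '' ES src tgt V with hA
  set B := orb L '' V with hB
  have hBft : Fintype B := hfin.fintype
  have hAft : Fintype A := hE.fintype
  set Y := IsFreeGroup.Generators L with hY
  let iso : L ≃* FreeGroup Y := IsFreeGroup.mulEquiv L |>.symm
  have hsecA : ∀ a : A, ∃ e ∈ ES src tgt V, orb L e = a.1 := fun a => a.2
  choose ta htaE hta using hsecA
  -- section of the orbit map
  let t : MulAction.orbitRel.Quotient L F → F := fun q => Quotient.out q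
  have ht : ∀ v, orb L (t (orb L v)) = orb L v := fun v => Quotient.out_eq _
  have hdec : ∀ v : F, v * (t (orb L v))⁻¹ ∈ L := by
    intro v
    obtain ⟨h, hh, h2⟩ := orb_eq.1 (ht v).symm
    rw [← h2, smul_eq_mul]
    have h3 : orb L (h * t (orb L v)) = orb L v := by
      rw [← smul_eq_mul, h2]
    rw [h3]
    simpa using hh
  let lp : F → L := fun v => ⟨v * (t (orb L v))⁻¹, hdec v⟩
  have hlp : ∀ (l : L) (v : F), lp (l.1 * v) = l * lp v := by
    intro l v
    have h3 : orb L (l.1 * v) = orb L v := orb_eq.2 ⟨l.1, l.2, rfl⟩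
    apply Subtype.ext
    simp only [lp, h3, Subgroup.coe_mul, mul_assoc]
  let θ : (Y → ℚ) → (L →* Multiplicative ℚ) := fun y =>
    (FreeGroup.lift (fun i => Multiplicative.ofAdd (y i))).comp iso.toMonoidHom
  have θadd : ∀ y y', θ (y + y') = θ y * θ y' := by
    intro y y'
    have : FreeGroup.lift (fun i => Multiplicative.ofAdd ((y + y') i)) =
        FreeGroup.lift (fun i => Multiplicative.ofAdd (y i)) *
        FreeGroup.lift (fun i => Multiplicative.ofAdd (y' i)) := by
      apply FreeGroup.ext_hom
      intro i
      simp
    ext l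
    simp only [θ, this, MonoidHom.mul_apply, MonoidHom.comp_apply]
  have θsmul : ∀ (r : ℚ) y l, (θ (r • y) l).toAdd = r * (θ y l).toAdd := by
    intro r y l
    have : FreeGroup.lift (fun i => Multiplicative.ofAdd ((r • y) i)) =
        (AddMonoidHom.toMultiplicative (AddMonoidHom.mulLeft r)).comp
        (FreeGroup.lift (fun i => Multiplicative.ofAdd (y i))) := by
      apply FreeGroup.ext_hom
      intro i
      simp
    simp only [θ, this, MonoidHom.comp_apply]
    rfl
  have θgen : ∀ y i, (θ y (iso.symm (FreeGroup.of i))).toAdd = y i := by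
    intro y i
    simp [θ]
  let f : (Y →₀ ℚ) × (B → ℚ) →ₗ[ℚ] (F → ℚ) :=
    { toFun := fun p v => (θ p.1 (lp v)).toAdd + (if h : orb L v ∈ B then p.2 ⟨_, h⟩ else 0)
      map_add' := by
        intro p q
        funext v
        simp only [Prod.fst_add, Prod.snd_add, Finsupp.coe_add, θadd, MonoidHom.mul_apply,
          toAdd_mul, Pi.add_apply]
        by_cases h : orb L v ∈ B <;> simp only [h, dif_pos, dif_neg, not_false_eq_true] <;> ring
      map_smul' := by
        intro r p
        funext v
        simp only [Prod.smul_fst, Prod.smul_snd, Finsupp.coe_smul, θsmul, Pi.smul_apply,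
          smul_eq_mul, RingHom.id_apply]
        by_cases h : orb L v ∈ B <;> simp only [h, dif_pos, dif_neg, not_false_eq_true] <;> ring }
  have hf : ∀ p (l : L) v, f p (l.1 * v) = (θ p.1 l).toAdd + f p v := by
    intro p l v
    have h3 : orb L (l.1 * v) = orb L v := orb_eq.2 ⟨l.1, l.2, rfl⟩
    simp only [f, LinearMap.coe_mk, AddHom.coe_mk, hlp, map_mul, toAdd_mul, h3, add_assoc]
  let Ψ : (Y →₀ ℚ) × (B → ℚ) →ₗ[ℚ] (A → ℚ) × ℚ :=
    { toFun := fun p => (fun a => f p (tgt (ta a)) - f p (src (ta a)), f p 1)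
      map_add' := by
        intro p q
        ext x
        · simp only [map_add, Pi.add_apply, Prod.fst_add]; ring
        · simp only [map_add, Pi.add_apply, Prod.snd_add]
      map_smul' := by
        intro r p
        ext x
        · simp [mul_sub]
        · simp }
  have hΨ : Function.Injective Ψ := by
    rw [← LinearMap.ker_eq_bot, LinearMap.ker_eq_bot']
    rintro p h0
    have ha : ∀ a : A, f p (tgt (ta a)) - f p (src (ta a)) = 0 :=
      fun a => congrFun (congrArg Prod.fst h0) a
    have hone : f p 1 = 0 := congrArg Prod.snd h0
    have hd : ∀ e ∈ ES src tgt V, f p (src e) = f p (tgt e) := by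
      intro e he
      have h2 := hta ⟨orb L e, e, he, rfl⟩
      obtain ⟨h, hh, h3⟩ := orb_eq.1 h2
      have h4 := ha ⟨orb L e, e, he, rfl⟩
      rw [← h3, T.src_smul, T.tgt_smul, hf p ⟨h, hh⟩, hf p ⟨h, hh⟩] at h4
      linarith
    have hz : ∀ v ∈ V, f p v = 0 := by
      intro v hv
      rw [hconn (f p) hd v hv 1 h1, hone]
    have hθ : ∀ l : L, (θ p.1 l).toAdd = 0 := by
      intro l
      have h2 := hf p l 1
      have h3 : f p (l.1 * 1) = 0 := hz _ (hV l.1 l.2 1 h1)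
      rw [hone, h3] at h2
      linarith
    have hp1 : p.1 = 0 := by
      ext i
      rw [← θgen p.1 i, hθ]
      rfl
    have hp2 : p.2 = 0 := by
      funext b
      obtain ⟨b, v, hv, rfl⟩ := b
      have h2 := hz v hv
      have hmem : orb L v ∈ B := ⟨v, hv, rfl⟩
      simp only [f, LinearMap.coe_mk, AddHom.coe_mk, hθ, zero_add, hmem, dif_pos] at h2
      exact h2
    exact Prod.ext hp1 hp2
  have hfd : Module.Finite ℚ ((Y →₀ ℚ) × (B → ℚ)) := Module.Finite.of_injective Ψ hΨ
  have hfd2 : Module.Finite ℚ (Y →₀ ℚ) :=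
    Module.Finite.of_surjective (LinearMap.fst ℚ (Y →₀ ℚ) (B → ℚ)) LinearMap.fst_surjective
  have hYfin : Finite Y := Module.Finite.finite_basis (Finsupp.basisSingleOne (R := ℚ) (ι := Y))
  have hYft : Fintype Y := Fintype.ofFinite Y
  have hrank := LinearMap.finrank_le_finrank_of_injective hΨ
  rw [Module.finrank_prod, Module.finrank_prod, Module.finrank_finsupp_self, Module.finrank_self,
    Module.finrank_fintype_fun_eq_card, Module.finrank_fintype_fun_eq_card] at hrank
  refine ⟨Finset.univ.image (fun i : Y => (iso.symm (FreeGroup.of i) : L).1), ?_, ?_⟩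
  · have h2 : ((Finset.univ.image (fun i : Y => (iso.symm (FreeGroup.of i) : L).1) : Finset F) :
        Set F) = (L.subtype.comp iso.symm.toMonoidHom) '' (Set.range FreeGroup.of) := by
      ext x
      simp
    rw [h2, ← MonoidHom.map_closure, FreeGroup.closure_range_of, ← Subgroup.map_map]
    rw [Subgroup.map_top_of_surjective _ iso.symm.surjective]
    rw [← MonoidHom.range_eq_map, Subgroup.range_subtype]
  · have h3 : (Finset.univ.image (fun i : Y => (iso.symm (FreeGroup.of i) : L).1)).card ≤
        Fintype.card Y := Finset.card_image_le
    rw [← Nat.card_coe_set_eq, ← Nat.card_coe_set_eq, Nat.card_eq_fintype_card,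
      Nat.card_eq_fintype_card]
    exact (Nat.add_le_add_right h3 _).trans hrank

end LinAlg

/-! ## Left orders on free groups -/

section Order

lemma exists_cone {F : Type*} [Group F]
    (hind : ∀ H : Subgroup F, H ≠ ⊥ → ∃ θ : H →* Multiplicative ℤ, ∃ h, θ h ≠ 1) :
    ∃ P : Set F, 1 ∈ P ∧ (∀ a ∈ P, ∀ b ∈ P, a * b ∈ P) ∧ (∀ a, a ∈ P ∨ a⁻¹ ∈ P) ∧
      (∀ a, a ∈ P → a⁻¹ ∈ P → a = 1) := by
  classical
  let 𝒮 : Set (Set F) := {P | (∀ a ∈ P, ∀ b ∈ P, a * b ∈ P) ∧ (∀ a, a ∈ P ∨ a⁻¹ ∈ P)}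
  obtain ⟨P, hP⟩ := zorn_superset 𝒮 (by
    intro c hc hchain
    refine ⟨⋂₀ c, ⟨?_, ?_⟩, fun s hs => Set.sInter_subset_of_mem hs⟩
    · intro a ha b hb s hs
      exact (hc hs).1 a (ha s hs) b (hb s hs)
    · intro a
      by_contra hcon
      push Not at hcon
      obtain ⟨h1, h2⟩ := hcon
      simp only [Set.mem_sInter, not_forall] at h1 h2
      obtain ⟨s, hs, has⟩ := h1
      obtain ⟨s', hs', has'⟩ := h2
      rcases hchain.total hs hs' with hss | hss
      · rcases (hc hs).2 a with h | h
        · exact has h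
        · exact has' (hss h)
      · rcases (hc hs').2 a with h | h
        · exact has (hss h)
        · exact has' h)
  have hmul := hP.prop.1
  have htot := hP.prop.2
  have hone : (1 : F) ∈ P := by
    rcases htot 1 with h | h
    · exact h
    · simpa using h
  refine ⟨P, hone, hmul, htot, ?_⟩
  let H : Subgroup F :=
    { carrier := {a | a ∈ P ∧ a⁻¹ ∈ P}
      mul_mem' := by
        rintro a b ⟨ha, ha'⟩ ⟨hb, hb'⟩
        exact ⟨hmul a ha b hb, by rw [mul_inv_rev]; exact hmul _ hb' _ ha'⟩
      one_mem' := ⟨hone, by simpa using hone⟩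
      inv_mem' := by
        rintro a ⟨ha, ha'⟩
        exact ⟨ha', by simpa using ha⟩ }
  have hmemH : ∀ a, a ∈ H ↔ a ∈ P ∧ a⁻¹ ∈ P := fun a => Iff.rfl
  by_contra hcon
  push Not at hcon
  obtain ⟨a, ha, ha', hane⟩ := hcon
  have hHne : H ≠ ⊥ := by
    intro h
    have : a ∈ H := ⟨ha, ha'⟩
    rw [h, Subgroup.mem_bot] at this
    exact hane this
  obtain ⟨θ, k, hk⟩ := hind H hHne
  let P' : Set F := {g | g ∈ P ∧ ∀ h : g ∈ H, 0 ≤ (θ ⟨g, h⟩).toAdd}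
  have hP' : P' ∈ 𝒮 := by
    constructor
    · rintro g ⟨hg, hg'⟩ l ⟨hl, hl'⟩
      refine ⟨hmul g hg l hl, fun h => ?_⟩
      have hgi : g⁻¹ ∈ P := by
        have := hmul l hl _ h.2
        simpa using this
      have hli : l⁻¹ ∈ P := by
        have := hmul _ h.2 g hg
        simpa using this
      have h1 : (⟨g * l, h⟩ : H) = ⟨g, hg, hgi⟩ * ⟨l, hl, hli⟩ := rfl
      rw [h1, map_mul, toAdd_mul]
      exact add_nonneg (hg' _) (hl' _)
    · intro g
      by_cases hgH : g ∈ H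
      · have h1 : g⁻¹ ∈ H := H.inv_mem hgH
        rcases le_total 0 (θ ⟨g, hgH⟩).toAdd with h | h
        · exact Or.inl ⟨hgH.1, fun _ => h⟩
        · refine Or.inr ⟨hgH.2, fun h2 => ?_⟩
          have h3 : (⟨g⁻¹, h2⟩ : H) = ⟨g, hgH⟩⁻¹ := rfl
          rw [h3, map_inv, toAdd_inv]
          linarith
      · rcases htot g with h | h
        · exact Or.inl ⟨h, fun h' => absurd h' hgH⟩
        · exact Or.inr ⟨h, fun h' => absurd (by simpa using H.inv_mem h') hgH⟩
  have hle : P ⊆ P' := hP.le_of_le hP' (fun g hg => hg.1)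
  apply hk
  have h1 : 0 ≤ (θ k).toAdd := (hle k.2.1).2 k.2
  have h2 : 0 ≤ (θ k⁻¹).toAdd := (hle (k⁻¹).2.1).2 (k⁻¹).2
  rw [map_inv, toAdd_inv] at h2
  have h3 : (θ k).toAdd = 0 := by linarith
  exact Multiplicative.toAdd.injective h3

lemma free_indicable {F : Type*} [Group F] [IsFreeGroup F] (H : Subgroup F) (hH : H ≠ ⊥) :
    ∃ θ : H →* Multiplicative ℤ, ∃ h, θ h ≠ 1 := by
  have : IsFreeGroup H := subgroupIsFreeOfIsFree H
  let iso : H ≃* FreeGroup (IsFreeGroup.Generators H) := (IsFreeGroup.mulEquiv H).symm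
  rcases isEmpty_or_nonempty (IsFreeGroup.Generators H) with hem | ⟨⟨i⟩⟩
  · exfalso
    apply hH
    rw [Subgroup.eq_bot_iff_forall]
    intro x hx
    have h1 : (⟨x, hx⟩ : H) = 1 := iso.injective (Subsingleton.elim _ _)
    exact congrArg Subtype.val h1
  · refine ⟨(FreeGroup.lift (fun _ => Multiplicative.ofAdd (1 : ℤ))).comp iso.toMonoidHom,
      iso.symm (FreeGroup.of i), ?_⟩
    simp only [MonoidHom.comp_apply, MulEquiv.coe_toMonoidHom, MulEquiv.apply_symm_apply,
      FreeGroup.lift_apply_of]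
    decide

lemma exists_left_order (F : Type*) [Group F] [IsFreeGroup F] :
    ∃ _ : LinearOrder F, ∀ a b c : F, b ≤ c → a * b ≤ a * c := by
  classical
  obtain ⟨P, h1, hmul, htot, hanti⟩ := exists_cone (F := F) free_indicable
  refine ⟨{ le := fun a b => a⁻¹ * b ∈ P
            le_refl := fun a => by simpa using h1
            le_trans := fun a b c hab hbc => by
              have := hmul _ hab _ hbc
              simpa [mul_assoc] using this
            le_antisymm := fun a b hab hba => by
              have := hanti _ hab (by simpa using hba)
              exact inv_mul_eq_one.1 this
            le_total := fun a b => by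
              have := htot (a⁻¹ * b)
              simpa using this
            toDecidableLE := fun _ _ => Classical.dec _ }, ?_⟩
  intro a b c (h : b⁻¹ * c ∈ P)
  change (a * b)⁻¹ * (a * c) ∈ P
  simpa [mul_assoc] using h

end Order

/-! ## The Cayley tree of a free group -/

section Cayley

/-- edges of the Cayley tree -/
@[ext] structure Edge (X : Type*) where
  /-- origin -/
  g : FreeGroup X
  /-- label -/
  x : X

variable {X : Type*}

instance : MulAction (FreeGroup X) (Edge X) where
  smul a e := ⟨a * e.g, e.x⟩
  one_smul e := by
    change Edge.mk (1 * e.g) e.x = e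
    rw [one_mul]
  mul_smul a b e := by
    change Edge.mk (a * b * e.g) e.x = Edge.mk (a * (b * e.g)) e.x
    rw [mul_assoc]

lemma Edge.smul_def (a : FreeGroup X) (e : Edge X) : a • e = ⟨a * e.g, e.x⟩ := rfl

/-- terminal vertex -/
def Edge.tgt (e : Edge X) : FreeGroup X := e.g * FreeGroup.of e.x

/-- step of the path integral -/
def stepPerm (φ : Edge X → ℚ) (x : X) : Equiv.Perm (FreeGroup X × ℚ) where
  toFun p := (p.1 * FreeGroup.of x, p.2 + φ ⟨p.1, x⟩)
  invFun p := (p.1 * (FreeGroup.of x)⁻¹, p.2 - φ ⟨p.1 * (FreeGroup.of x)⁻¹, x⟩)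
  left_inv p := by simp
  right_inv p := by simp

/-- path integral -/
def pathInt (φ : Edge X → ℚ) : FreeGroup X →* (Equiv.Perm (FreeGroup X × ℚ))ᵐᵒᵖ :=
  FreeGroup.lift (fun x => MulOpposite.op (stepPerm φ x))

lemma pathInt_mul (φ : Edge X → ℚ) (g : FreeGroup X) (x : X) (p : FreeGroup X × ℚ) :
    (pathInt φ (g * FreeGroup.of x)).unop p = stepPerm φ x ((pathInt φ g).unop p) := by
  rw [map_mul, MulOpposite.unop_mul, Equiv.Perm.mul_apply]
  simp [pathInt]

lemma free_induction {Q : FreeGroup X → Prop} (h1 : Q 1)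
    (hstep : ∀ g x, Q g ↔ Q (g * FreeGroup.of x)) (g : FreeGroup X) : Q g := by
  have key : ∀ k g : FreeGroup X, Q g ↔ Q (g * k) := by
    intro k
    induction k using FreeGroup.induction_on with
    | C1 => intro g; simp
    | of x => intro g; exact hstep g x
    | inv_of x ih => intro g; rw [hstep (g * _) x]; simp
    | mul x y ihx ihy => intro g; rw [ihx g, ihy (g * x), mul_assoc]
  simpa using (key g 1).1 h1

lemma pathInt_fst (φ : Edge X → ℚ) (g : FreeGroup X) :
    ((pathInt φ g).unop (1, 0)).1 = g := by
  refine free_induction (Q := fun g => ((pathInt φ g).unop (1, 0)).1 = g) ?_ ?_ g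
  · simp
  · intro g x
    rw [pathInt_mul]
    simp [stepPerm]

lemma isTree_cayley : IsTree (F := FreeGroup X) (E := Edge X) Edge.g Edge.tgt where
  src_smul _ _ := rfl
  tgt_smul a e := by simp [Edge.tgt, Edge.smul_def, mul_assoc]
  integ φ := by
    refine ⟨fun g => ((pathInt φ g).unop (1, 0)).2, fun e => ?_⟩
    simp only [Edge.tgt, pathInt_mul]
    simp [stepPerm, pathInt_fst]
  uniq f hf a b := by
    have key : ∀ g, f g = f 1 := fun g =>
      free_induction (Q := fun g => f g = f 1) rfl (fun g x => by
        have := hf ⟨g, x⟩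
        simp only [Edge.tgt] at this
        rw [this]) g
    rw [key a, key b]
  free a e h := by
    have := congrArg Edge.g h
    simpa [Edge.smul_def] using this

lemma exists_ord (X : Type*) : ∃ (_ : LinearOrder (FreeGroup X)) (_ : LinearOrder (Edge X)),
    OrdInv (FreeGroup X) (Edge X) := by
  classical
  obtain ⟨o, ho⟩ := exists_left_order (FreeGroup X)
  letI : LinearOrder X := IsWellOrder.linearOrder WellOrderingRel
  letI oe : LinearOrder (Edge X) := LinearOrder.lift'
    (fun e : Edge X => toLex (e.g, e.x)) (fun e e' h => by
      have h1 := toLex.injective h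
      simp only [Prod.mk.injEq] at h1
      exact Edge.ext h1.1 h1.2)
  refine ⟨o, oe, ho, ?_⟩
  intro a b c hbc
  have h1 : toLex (b.g, b.x) ≤ toLex (c.g, c.x) := hbc
  change toLex (a * b.g, b.x) ≤ toLex (a * c.g, c.x)
  rw [Prod.Lex.toLex_le_toLex] at h1 ⊢
  rcases h1 with h | ⟨h, h'⟩
  · left
    refine lt_of_le_of_ne (ho a _ _ h.le) (fun heq => h.ne (mul_left_cancel heq))
  · right
    simp only at h h' ⊢
    exact ⟨by rw [h], h'⟩

/-- The Hanna Neumann inequality. -/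
theorem hanna_neumann (S₁ S₂ : Finset (FreeGroup X)) :
    ∃ S : Finset (FreeGroup X), Subgroup.closure (S : Set (FreeGroup X)) =
      Subgroup.closure (S₁ : Set (FreeGroup X)) ⊓ Subgroup.closure (S₂ : Set (FreeGroup X)) ∧
      S.card ≤ (S₁.card - 1) * (S₂.card - 1) + 1 := by
  classical
  obtain ⟨o, oe, O⟩ := exists_ord X
  have T := isTree_cayley (X := X)
  obtain ⟨V, hV, hV1, hVf, hVc⟩ := T.exists_hull S₁
  obtain ⟨W, hW, hW1, hWf, hWc⟩ := T.exists_hull S₂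
  obtain ⟨hVE, hVn⟩ := T.count_E_le S₁ hV hV1 hVf
  obtain ⟨hWE, hWn⟩ := T.count_E_le S₂ hW hW1 hWf
  set H := Subgroup.closure (S₁ : Set (FreeGroup X)) with hHdef
  set K := Subgroup.closure (S₂ : Set (FreeGroup X)) with hKdef
  by_cases hH : H = ⊥
  · exact ⟨∅, by simp [hH], by simp⟩
  by_cases hK : K = ⊥
  · exact ⟨∅, by simp [hK], by simp⟩
  have hLfree : IsFreeGroup (H ⊓ K : Subgroup (FreeGroup X)) := subgroupIsFreeOfIsFree _
  have hLV : Inv (H ⊓ K) (V ∩ W) := fun h hh v hv => ⟨hV h hh.1 v hv.1, hW h hh.2 v hv.2⟩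
  have hLc := T.fconn_inter hVc hWc
  obtain ⟨hLE, hLB⟩ := T.count_BR hVE hWE
  have hLVf : (orb (H ⊓ K) '' (V ∩ W)).Finite := by
    refine (count_le (orb (H ⊓ K)) (fun v => (orb H v, orb K v)) (V ∩ W) (V ∩ W)
      (fun a b => a = b) (fun a ha => ⟨a, ha, rfl⟩) ?_ ((hVf.prod hWf).subset ?_)).1
    · rintro a _ a' _ b b' rfl rfl hq
      simp only [Prod.mk.injEq, orb_eq] at hq
      obtain ⟨⟨h, hh, h1⟩, ⟨k, hk, h2⟩⟩ := hq
      have h3 : h = k := mul_right_cancel (h1.trans h2.symm)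
      subst h3
      exact orb_eq.2 ⟨h, ⟨hh, hk⟩, h1⟩
    · rintro _ ⟨v, hv, rfl⟩
      exact ⟨⟨v, hv.1, rfl⟩, ⟨v, hv.2, rfl⟩⟩
  obtain ⟨S, hS, hcard⟩ := T.gen (H ⊓ K) hLV ⟨hV1, hW1⟩ hLc hLVf hLE
  refine ⟨S, hS, ?_⟩
  have e1 := T.count_split O hV hVE
  have e2 := T.count_split O hW hWE
  have e3 := T.count_split O hLV hLE
  have a1 := T.count_V O hV hVf hVE hVc hH
  have a2 := T.count_V O hW hWf hWE hWc hK
  have b3 := T.count_NB O hLV hLVf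
  have c1 : (orb H '' BR Edge.g Edge.tgt V).ncard ≤ S₁.card - 1 := by omega
  have c2 : (orb K '' BR Edge.g Edge.tgt W).ncard ≤ S₂.card - 1 := by omega
  have := hLB.trans (Nat.mul_le_mul c1 c2)
  omega

end Cayley

/-! ## Virtually free groups -/

section Virtual

/-- Copy of the generation predicate. -/
def Gen {G : Type*} [Group G] (H : Subgroup G) (n : ℕ) : Prop :=
  ∃ S : Finset G, Subgroup.closure (S : Set G) = H ∧ S.card ≤ n

lemma Gen.map {G G' : Type*} [Group G] [Group G'] {H : Subgroup G} {n : ℕ} (h : Gen H n)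
    (f : G →* G') : Gen (H.map f) n := by
  classical
  obtain ⟨S, rfl, hS⟩ := h
  refine ⟨S.image f, ?_, Finset.card_image_le.trans hS⟩
  rw [MonoidHom.map_closure, Finset.coe_image]

lemma Gen.of_map {G G' : Type*} [Group G] [Group G'] {H : Subgroup G} {n : ℕ} (f : G →* G')
    (hf : Function.Injective f) (h : Gen (H.map f) n) : Gen H n := by
  classical
  obtain ⟨S, hS, hc⟩ := h
  refine ⟨S.preimage f hf.injOn, ?_, ?_⟩
  · apply Subgroup.map_injective hf
    rw [MonoidHom.map_closure, Finset.coe_preimage, Set.image_preimage_eq_of_subset, hS]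
    intro x hx
    have : x ∈ H.map f := hS ▸ Subgroup.subset_closure hx
    obtain ⟨y, _, rfl⟩ := this
    exact ⟨y, rfl⟩
  · refine le_trans ?_ hc
    rw [← Finset.card_image_of_injective _ hf]
    exact Finset.card_le_card (by
      intro x hx
      simp only [Finset.mem_image, Finset.mem_preimage] at hx
      obtain ⟨y, hy, rfl⟩ := hx
      exact hy)

lemma relIndex_le_index' {G : Type*} [Group G] (F H : Subgroup G) (hF : F.index ≠ 0) :
    F.relIndex H ≠ 0 ∧ F.relIndex H ≤ F.index := by
  rw [← Subgroup.relIndex_top_right] at hF ⊢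
  exact ⟨fun h => hF (Subgroup.relIndex_eq_zero_of_le_right le_top h), Subgroup.relIndex_le_of_le_right le_top hF⟩

lemma Gen.schreier {G : Type*} [Group G] (F H : Subgroup G) (hF : F.index ≠ 0) {n : ℕ}
    (hn : 1 ≤ n) (h : Gen H n) : Gen (H ⊓ F) (F.index * (n - 1) + 1) := by
  classical
  obtain ⟨S, hS, hc⟩ := h
  let π : FreeGroup S →* G := FreeGroup.lift (fun s => s.1)
  have hrange : π.range = H := by
    rw [FreeGroup.range_lift_eq_closure, ← hS]
    congr 1
    simp
  set N := F.comap π with hN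
  have hidx : N.index = F.relIndex H := by rw [hN, Subgroup.index_comap, hrange]
  obtain ⟨hne, hle⟩ := relIndex_le_index' F H hF
  rw [← hidx] at hne hle
  have hNfree : IsFreeGroup N := subgroupIsFreeOfIsFree _
  have T := isTree_cayley (X := S)
  have hcardV : Nat.card (MulAction.orbitRel.Quotient N (FreeGroup S)) = N.index :=
    Nat.card_congr (QuotientGroup.quotientRightRelEquivQuotientLeftRel N)
  have hfinq : Finite (MulAction.orbitRel.Quotient N (FreeGroup S)) :=
    Nat.finite_of_card_ne_zero (by rw [hcardV]; exact hne)
  have hV : (orb N '' (Set.univ : Set (FreeGroup S))) = Set.univ := by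
    rw [Set.image_univ]
    exact Set.range_eq_univ.2 Quotient.mk_surjective
  have hVn : (orb N '' (Set.univ : Set (FreeGroup S))).ncard = N.index := by
    rw [hV, Set.ncard_univ, hcardV]
  have hE := count_le (orb N) (fun e : Edge S => (orb N e.g, e.x))
    (ES Edge.g Edge.tgt (Set.univ : Set (FreeGroup S))) Set.univ (fun a b => a = b)
    (fun a _ => ⟨a, trivial, rfl⟩) (by
      rintro a _ a' _ b b' rfl rfl hq
      simp only [Prod.mk.injEq, orb_eq] at hq
      obtain ⟨⟨h, hh, h1⟩, h2⟩ := hq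
      exact orb_eq.2 ⟨h, hh, Edge.ext h1 h2.symm⟩) (Set.toFinite _)
  have hEn : ((fun e : Edge S => (orb N e.g, e.x)) '' Set.univ).ncard ≤ N.index * S.card := by
    refine (Set.ncard_le_ncard (Set.subset_univ _) (Set.toFinite _)).trans ?_
    rw [Set.ncard_univ, Nat.card_prod, hcardV]
    simp
  obtain ⟨S', hS', hc'⟩ := T.gen N (V := Set.univ) (fun _ _ _ _ => trivial) trivial
    (fun f hf v _ w _ => T.uniq f (fun e => hf e ⟨trivial, trivial⟩) v w)
    (Set.toFinite _) hE.1
  rw [hVn] at hc'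
  have hgen : Gen N (F.index * (n - 1) + 1) := by
    refine ⟨S', hS', ?_⟩
    have h1 : N.index * S.card ≤ N.index * n := Nat.mul_le_mul_left _ hc
    have h2 : N.index * n = N.index * (n - 1) + N.index := by
      obtain ⟨k, rfl⟩ := Nat.exists_eq_add_of_le' hn
      simp [mul_add]
    have h3 : N.index * (n - 1) ≤ F.index * (n - 1) := Nat.mul_le_mul_right _ hle
    have h4 := hE.2
    omega
  have := hgen.map π
  rwa [hN, Subgroup.map_comap_eq, hrange] at this

lemma Gen.extend {G : Type*} [Group G] (F H : Subgroup G) (hF : F.index ≠ 0) {r : ℕ}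
    (h : Gen (H ⊓ F) r) : Gen H (r + (F.index - 1)) := by
  classical
  obtain ⟨S, hS, hc⟩ := h
  obtain ⟨hne, hle⟩ := relIndex_le_index' F H hF
  have hidx : Nat.card (H ⧸ F.subgroupOf H) = F.relIndex H := rfl
  have hfin : Finite (H ⧸ F.subgroupOf H) := Nat.finite_of_card_ne_zero (by rw [hidx]; exact hne)
  have hft : Fintype (H ⧸ F.subgroupOf H) := Fintype.ofFinite _
  let q1 : H ⧸ F.subgroupOf H := QuotientGroup.mk 1
  let R : Finset G := (Finset.univ.erase q1).image (fun q => (Quotient.out q : H).1)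
  have hR : R.card ≤ F.index - 1 := by
    refine Finset.card_image_le.trans ?_
    rw [Finset.card_erase_of_mem (Finset.mem_univ _), Finset.card_univ,
      ← Nat.card_eq_fintype_card]
    have hidx2 : Nat.card (Quotient (QuotientGroup.leftRel (F.subgroupOf H))) = F.relIndex H := hidx
    rw [hidx2]
    omega
  refine ⟨S ∪ R, ?_, (Finset.card_union_le _ _).trans (Nat.add_le_add hc hR)⟩
  have hsubF : H ⊓ F ≤ Subgroup.closure ((S ∪ R : Finset G) : Set G) := by
    rw [← hS]
    exact Subgroup.closure_mono (by simp)
  apply le_antisymm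
  · rw [Subgroup.closure_le]
    intro x hx
    rw [Finset.coe_union] at hx
    rcases hx with hx | hx
    · have : x ∈ H ⊓ F := hS ▸ Subgroup.subset_closure hx
      exact this.1
    · simp only [R, Finset.coe_image, Set.mem_image] at hx
      obtain ⟨q, _, rfl⟩ := hx
      exact (Quotient.out q : H).2
  · intro x hx
    let y : H := ⟨x, hx⟩
    by_cases hy : (QuotientGroup.mk y : H ⧸ F.subgroupOf H) = q1
    · apply hsubF
      refine ⟨hx, ?_⟩
      have h1 := QuotientGroup.eq.1 hy.symm
      simpa [Subgroup.mem_subgroupOf, y] using h1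
    · have h1 : (QuotientGroup.mk (Quotient.out (QuotientGroup.mk y : H ⧸ F.subgroupOf H)) :
          H ⧸ F.subgroupOf H) = QuotientGroup.mk y := Quotient.out_eq _
      have h2 := QuotientGroup.eq.1 h1
      set z : H := Quotient.out (QuotientGroup.mk y : H ⧸ F.subgroupOf H) with hz
      have hzR : z.1 ∈ R := by
        refine Finset.mem_image.2 ⟨QuotientGroup.mk y, ?_, rfl⟩
        simp [hy]
      have h3 : x = z.1 * (z⁻¹ * y : H).1 := by simp [y]
      rw [h3]
      refine Subgroup.mul_mem _ (Subgroup.subset_closure ?_) (hsubF ⟨(z⁻¹ * y : H).2, h2⟩)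
      exact Finset.mem_coe.2 (Finset.mem_union_right _ hzR)

theorem main {G : Type*} [Group G] (F : Subgroup G)
    [IsFreeGroup ↥F] (m : ℕ) (hm : 0 < m) (hindex : F.index = m)
    (n₁ n₂ : ℕ) (hn₁ : 1 ≤ n₁) (hn₂ : 1 ≤ n₂)
    (H₁ H₂ : Subgroup G) (hH₁ : Gen H₁ n₁) (hH₂ : Gen H₂ n₂) :
    Gen (H₁ ⊓ H₂) (m ^ 2 * (n₁ - 1) * (n₂ - 1) + m) := by
  classical
  have hF : F.index ≠ 0 := by omega
  let iso : FreeGroup (IsFreeGroup.Generators F) ≃* F := IsFreeGroup.mulEquiv F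
  let ι : FreeGroup (IsFreeGroup.Generators F) →* G := F.subtype.comp iso.toMonoidHom
  have hι : Function.Injective ι := F.subtype_injective.comp iso.injective
  have hrange : ι.range = F := by
    rw [MonoidHom.range_eq_map, ← Subgroup.map_map,
      Subgroup.map_top_of_surjective _ iso.surjective, ← MonoidHom.range_eq_map,
      Subgroup.range_subtype]
  have hmap : ∀ H : Subgroup G, (H.comap ι).map ι = H ⊓ F := by
    intro H
    rw [Subgroup.map_comap_eq, hrange, inf_comm]
  have key : ∀ H : Subgroup G, ∀ n, 1 ≤ n → Gen H n → Gen (H.comap ι) (m * (n - 1) + 1) := by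
    intro H n hn hH
    refine Gen.of_map ι hι ?_
    rw [hmap, ← hindex]
    exact Gen.schreier F H hF hn hH
  obtain ⟨S₁, hS₁, hc₁⟩ := key H₁ n₁ hn₁ hH₁
  obtain ⟨S₂, hS₂, hc₂⟩ := key H₂ n₂ hn₂ hH₂
  obtain ⟨S, hS, hc⟩ := hanna_neumann S₁ S₂
  rw [hS₁, hS₂, ← Subgroup.comap_inf] at hS
  have h1 : Gen ((H₁ ⊓ H₂).comap ι) (m ^ 2 * (n₁ - 1) * (n₂ - 1) + 1) := by
    refine ⟨S, hS, hc.trans ?_⟩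
    have h2 : S₁.card - 1 ≤ m * (n₁ - 1) := by omega
    have h3 : S₂.card - 1 ≤ m * (n₂ - 1) := by omega
    have h4 := Nat.mul_le_mul h2 h3
    have h5 : m * (n₁ - 1) * (m * (n₂ - 1)) = m ^ 2 * (n₁ - 1) * (n₂ - 1) := by ring
    omega
  have h2 := h1.map ι
  rw [hmap] at h2
  have h3 := h2.extend F (H₁ ⊓ H₂) hF
  rw [hindex] at h3
  have h4 : m ^ 2 * (n₁ - 1) * (n₂ - 1) + 1 + (m - 1) = m ^ 2 * (n₁ - 1) * (n₂ - 1) + m := by omega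
  rwa [h4] at h3

end Virtual

end HNC

/-- if `G` has a free subgroup `F` of finite index `m`, `n₁, n₂ ≥ 1`, and
`H₁, H₂ ≤ G` are generated by at most `n₁` and `n₂` elements respectively, then
`H₁ ⊓ H₂` is generated by at most `m²(n₁−1)(n₂−1) + m` elements.
In particular, every virtually free group is strongly Howson. -/
theorem inter_genLE_of_virtually_free {G : Type*} [Group G] (F : Subgroup G)
    [IsFreeGroup ↥F] (m : ℕ) (hm : 0 < m) (hindex : F.index = m)
    (n₁ n₂ : ℕ) (hn₁ : 1 ≤ n₁) (hn₂ : 1 ≤ n₂)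
    (H₁ H₂ : Subgroup G) (hH₁ : H₁.GenLE n₁) (hH₂ : H₂.GenLE n₂) :
    (H₁ ⊓ H₂).GenLE (m ^ 2 * (n₁ - 1) * (n₂ - 1) + m) := by
  exact HNC.main F m hm hindex n₁ n₂ hn₁ hn₂ H₁ H₂ hH₁ hH₂
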